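/- Let u be a pair potential that is stable with constant B ≥ 0 and regular. Then for every bounded measurable Λ ⊂ ℝ^d and every real z with 0 < z < z₀, the partition function at negative activity is strictly positive: Ξ_Λ(−z) = 1 + Σ_{k≥1} ((−z)^k/k!) ∫_{Λ^k} e^{−βH(y_1,…,y_k)} dy_1⋯dy_k > 0. (This is the second Lenard-positivity condition for the Kirkwood closure correlation functions ρ^{(n)}(x_1,…,x_n) = z^n Π_{1≤i<j≤n} e^{−βu(x_i−x_j)}.) -/

import Mathlib

open MeasureTheory Bornology

noncomputable section

/-- Boltzmann factor `e^{-β t}` with the convention `e^{-β(+∞)} = 0`. -/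
def boltz (β : ℝ) (t : EReal) : ℝ :=
  if t = ⊤ then 0 else Real.exp (-β * t.toReal)

/-- Hamiltonian of a pair potential: `H(x₁,…,xₙ) = ∑_{i<j} u(xᵢ - xⱼ)`. -/
def Ham {d : ℕ} (u : (Fin d → ℝ) → EReal) (n : ℕ) (x : Fin n → (Fin d → ℝ)) : EReal :=
  ∑ p ∈ Finset.univ.filter (fun p : Fin n × Fin n => p.1 < p.2), u (x p.1 - x p.2)

/-- A pair potential: even, measurable, bounded from below. -/
def IsPairPotential {d : ℕ} (u : (Fin d → ℝ) → EReal) : Prop :=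
  Measurable u ∧ (∀ x, u (-x) = u x) ∧ ∃ m : ℝ, ∀ x, (m : EReal) ≤ u x

/-- Stability with constant `B`: `H(x₁,…,xₙ) ≥ -Bn`. -/
def IsStable {d : ℕ} (u : (Fin d → ℝ) → EReal) (B : ℝ) : Prop :=
  ∀ (n : ℕ) (x : Fin n → (Fin d → ℝ)), ((-(B * n) : ℝ) : EReal) ≤ Ham u n x

/-- Mayer function `f_β = e^{-βu} - 1`. -/
def mayer {d : ℕ} (β : ℝ) (u : (Fin d → ℝ) → EReal) (x : Fin d → ℝ) : ℝ :=
  boltz β (u x) - 1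

/-- Regularity: the Mayer function is integrable. -/
def IsRegularPP {d : ℕ} (β : ℝ) (u : (Fin d → ℝ) → EReal) : Prop :=
  Integrable (mayer β u)

/-- `C_β(u) = ∫ |e^{-βu} - 1|`. -/
def Creg {d : ℕ} (β : ℝ) (u : (Fin d → ℝ) → EReal) : ℝ :=
  ∫ x, |mayer β u x|

/-- The cartesian power `Λ^k`. -/
def cube {d : ℕ} (Λ : Set (Fin d → ℝ)) (k : ℕ) : Set (Fin k → (Fin d → ℝ)) :=
  Set.univ.pi fun _ => Λ

/-- Grand canonical partition function `Ξ_Λ(z)`. -/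
def Xi {d : ℕ} (β : ℝ) (u : (Fin d → ℝ) → EReal) (Λ : Set (Fin d → ℝ)) (z : ℂ) : ℂ :=
  ∑' k : ℕ, z ^ k / (Nat.factorial k : ℂ) *
    ((∫ y in cube Λ k, boltz β (Ham u k y) : ℝ) : ℂ)

/-- `θ_Λ^{(n)}(z; x₁,…,xₙ)`. -/
def theta {d : ℕ} (β : ℝ) (u : (Fin d → ℝ) → EReal) (Λ : Set (Fin d → ℝ)) (n : ℕ)
    (z : ℂ) (x : Fin n → (Fin d → ℝ)) : ℂ :=
  (Xi β u Λ z)⁻¹ * ∑' k : ℕ, z ^ (n + k) / (Nat.factorial k : ℂ) *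
    ((∫ y in cube Λ k, boltz β (Ham u (n + k) (Fin.append x y)) : ℝ) : ℂ)

end


noncomputable section KS
open scoped ENNReal

/-- The multiset of values of a tuple. -/
def ms {E : Type*} {n : ℕ} (x : Fin n → E) : Multiset E := Finset.univ.val.map x

theorem ms_cons {E : Type*} {n : ℕ} (a : E) (x : Fin n → E) :
    ms (Fin.cons a x : Fin (n+1) → E) = a ::ₘ ms x := by
  simp [ms, Fin.univ_val_map, List.ofFn_succ]

theorem ms_surj {E : Type*} (s : Multiset E) : ∃ (n : ℕ) (x : Fin n → E), s = ms x := by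
  induction s using Quotient.inductionOn with
  | _ l => exact ⟨l.length, l.get, by simp [ms, Fin.univ_val_map]⟩

/-- Bounded functions on finite configurations. -/
abbrev LP (E : Type*) := lp (fun _ : Multiset E => ℝ) ∞

/-- Measurable bounded functions on finite configurations. -/
def XS (E : Type*) [MeasurableSpace E] : Submodule ℝ (LP E) where
  carrier := {g | ∀ n, Measurable fun x : Fin n → E => g (ms x)}
  add_mem' := by
    intro a b ha hb n
    exact (ha n).add (hb n)
  zero_mem' := by
    intro n
    simp
  smul_mem' := by
    intro c a ha n
    simpa using (ha n).const_mul c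

theorem XS_complete (E : Type*) [MeasurableSpace E] : CompleteSpace (XS E) := by
  refine (completeSpace_coe_iff_isComplete (s := (XS E : Set (LP E)))).2 (IsClosed.isComplete ?_)
  apply IsSeqClosed.isClosed
  intro f g hf hg n
  refine measurable_of_tendsto_metrizable (f := fun k (x : Fin n → E) => f k (ms x))
    (fun k => hf k n) ?_
  rw [tendsto_pi_nhds]
  intro x
  exact ((lp.evalCLM (𝕜 := ℝ) (fun _ : Multiset E => ℝ) ∞ (ms x)).continuous.tendsto g).comp hg

/-- The Banach space, with cached instances. -/
def XX (E : Type*) [MeasurableSpace E] : Type _ := XS E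

instance (E : Type*) [MeasurableSpace E] : NormedAddCommGroup (XX E) :=
  inferInstanceAs (NormedAddCommGroup (XS E))

instance (E : Type*) [MeasurableSpace E] : NormedSpace ℝ (XX E) :=
  inferInstanceAs (NormedSpace ℝ (XS E))

instance (E : Type*) [MeasurableSpace E] : CompleteSpace (XX E) := XS_complete E

section Banach
variable {X : Type*} [NormedAddCommGroup X] [NormedSpace ℝ X] [CompleteSpace X]

theorem clm_mul_apply (A C : X →L[ℝ] X) (g : X) : (A * C) g = A (C g) := rfl

theorem exp_hasSum (A : X →L[ℝ] X) (t : ℝ) (g : X) (l : X →L[ℝ] ℝ) :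
    HasSum (fun k : ℕ => t ^ k / (k.factorial : ℝ) * l ((A ^ k) g))
      (l (NormedSpace.exp (t • A) g)) := by
  have h := NormedSpace.exp_series_hasSum_exp' (𝕂 := ℝ) (t • A)
  have h2 := ((l).comp (ContinuousLinearMap.apply ℝ (X) g)).hasSum h
  have e : (fun k : ℕ => t ^ k / (k.factorial : ℝ) * l ((A ^ k) g)) = fun k : ℕ =>
      (l.comp (ContinuousLinearMap.apply ℝ X g)) ((k.factorial : ℝ)⁻¹ • (t • A) ^ k) := by
    funext k
    simp [smul_pow]
    ring
  rw [e]
  exact h2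

theorem exp_norm_le (A : X →L[ℝ] X) (g : X) :
    ‖NormedSpace.exp A g‖ ≤ Real.exp ‖A‖ * ‖g‖ := by
  have h := NormedSpace.exp_series_hasSum_exp' (𝕂 := ℝ) A
  have h1 := (ContinuousLinearMap.apply ℝ X g).hasSum h
  have h2 : HasSum (fun k : ℕ => ‖A‖ ^ k / (k.factorial : ℝ) * ‖g‖) (Real.exp ‖A‖ * ‖g‖) := by
    refine HasSum.mul_right _ ?_
    rw [Real.exp_eq_exp_ℝ]
    exact NormedSpace.expSeries_div_hasSum_exp ‖A‖
  have h3 : NormedSpace.exp A g =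
      ∑' k : ℕ, (ContinuousLinearMap.apply ℝ X g) ((k.factorial : ℝ)⁻¹ • A ^ k) := h1.tsum_eq.symm
  rw [h3]
  refine tsum_of_norm_bounded h2 fun k => ?_
  rw [ContinuousLinearMap.apply_apply, smul_apply, norm_smul, norm_inv,
    Real.norm_natCast, div_eq_inv_mul, mul_assoc]
  gcongr
  refine ((A ^ k).le_opNorm g).trans ?_
  gcongr
  induction k with
  | zero => rw [pow_zero, pow_zero]; exact ContinuousLinearMap.norm_id_le
  | succ k ih =>
    rw [pow_succ, pow_succ]
    exact (norm_mul_le _ _).trans (mul_le_mul_of_nonneg_right ih (norm_nonneg _))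

theorem exp_inj (A : X →L[ℝ] X) (g : X) (h : NormedSpace.exp A g = 0) : g = 0 := by
  let : NormedAlgebra ℚ (X →L[ℝ] X) := NormedAlgebra.restrictScalars ℚ ℝ _
  obtain ⟨v, hv⟩ := (NormedSpace.isUnit_exp A).exists_left_inv
  have : (v * NormedSpace.exp A) g = g := by rw [hv]; rfl
  rw [← this, clm_mul_apply, h, map_zero]

theorem exp_cont (A : X →L[ℝ] X) (g : X) (l : X →L[ℝ] ℝ) :
    Continuous fun t : ℝ => l (NormedSpace.exp (t • A) g) := by
  let : NormedAlgebra ℚ (X →L[ℝ] X) := NormedAlgebra.restrictScalars ℚ ℝ _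
  have h1 : Continuous fun t : ℝ => NormedSpace.exp (t • A) :=
    NormedSpace.exp_continuous.comp (continuous_id.smul continuous_const)
  exact (l).continuous.comp (h1.clm_apply continuous_const)

theorem exp_add_apply (A C : X →L[ℝ] X) (h : Commute A C) (g : X) :
    NormedSpace.exp (A + C) g = NormedSpace.exp A (NormedSpace.exp C g) := by
  let : NormedAlgebra ℚ (X →L[ℝ] X) := NormedAlgebra.restrictScalars ℚ ℝ _
  rw [NormedSpace.exp_add_of_commute h]; rfl

end Banach

variable {E : Type*} [MeasurableSpace E]

/-- Evaluation at a configuration. -/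
def ev (s : Multiset E) : XX E →L[ℝ] ℝ :=
  (lp.evalCLM (𝕜 := ℝ) (fun _ : Multiset E => ℝ) ∞ s).comp (XS E).subtypeL

theorem ev_le (s : Multiset E) (g : XX E) : |ev s g| ≤ ‖g‖ :=
  lp.norm_apply_le_norm ENNReal.top_ne_zero g.1 s

theorem ev_meas (n : ℕ) (g : XX E) : Measurable fun x : Fin n → E => ev (ms x) g :=
  g.2 n

theorem XS_norm_le (g : XX E) (C : ℝ) (hC : 0 ≤ C) (h : ∀ s, |ev s g| ≤ C) : ‖g‖ ≤ C :=
  lp.norm_le_of_forall_le hC h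

theorem XS_ext (g h : XX E) (H : ∀ s, ev s g = ev s h) : g = h :=
  Subtype.ext (lp.ext (funext H))

/-- Constructor. -/
def mkXS (f : Multiset E → ℝ) (C : ℝ) (hC : ∀ s, |f s| ≤ C)
    (hm : ∀ n, Measurable fun x : Fin n → E => f (ms x)) : XX E :=
  ⟨⟨f, memℓp_infty ⟨C, by rintro _ ⟨s, rfl⟩; exact hC s⟩⟩, hm⟩

@[simp] theorem ev_mkXS (f : Multiset E → ℝ) (C : ℝ) (hC : ∀ s, |f s| ≤ C)
    (hm : ∀ n, Measurable fun x : Fin n → E => f (ms x)) (s : Multiset E) :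
    ev s (mkXS f C hC hm) = f s := rfl

theorem cons_meas (n : ℕ) :
    Measurable fun p : E × (Fin n → E) => (Fin.cons p.1 p.2 : Fin (n+1) → E) := by
  rw [measurable_pi_iff]
  intro i
  refine Fin.cases ?_ (fun j => ?_) i
  · simpa using measurable_fst
  · simpa [Function.comp_def] using (measurable_pi_apply j).comp measurable_snd

theorem ev_cons_meas (n : ℕ) (g : XX E) :
    Measurable fun p : E × (Fin n → E) => ev (p.1 ::ₘ ms p.2) g := by
  have := (ev_meas (n+1) g).comp (cons_meas n)
  simpa [Function.comp_def, ms_cons] using this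

theorem ev_cons_meas1 (s : Multiset E) (g : XX E) :
    Measurable fun y : E => ev (y ::ₘ s) g := by
  obtain ⟨n, x, rfl⟩ := ms_surj s
  exact (ev_cons_meas n g).comp (measurable_id.prodMk measurable_const)

theorem ev_cons_meas2 (s : Multiset E) (g : XX E) :
    Measurable fun p : E × E => ev (p.1 ::ₘ p.2 ::ₘ s) g := by
  obtain ⟨n, x, rfl⟩ := ms_surj s
  have h : Measurable fun p : E × E => (p.1, (Fin.cons p.2 x : Fin (n+1) → E)) :=
    measurable_fst.prodMk ((cons_meas n).comp (measurable_snd.prodMk measurable_const))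
  have := (ev_cons_meas (n+1) g).comp h
  simpa [Function.comp_def, ms_cons] using this

variable (μ : Measure E) [IsFiniteMeasure μ]

theorem int_cons {φ : E → ℝ} (hφ : Integrable φ μ) (s : Multiset E) (g : XX E) :
    Integrable (fun y => φ y * ev (y ::ₘ s) g) μ :=
  hφ.mul_bdd (c := ‖g‖) (ev_cons_meas1 s g).aestronglyMeasurable
    (Filter.Eventually.of_forall fun y => ev_le _ g)

theorem int_cons_le {φ : E → ℝ} (hφ : Integrable φ μ) (s : Multiset E) (g : XX E) :
    |∫ y, φ y * ev (y ::ₘ s) g ∂μ| ≤ (∫ y, |φ y| ∂μ) * ‖g‖ := by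
  refine (abs_integral_le_integral_abs (f := fun y => φ y * ev (y ::ₘ s) g)).trans ?_
  rw [← integral_mul_const]
  refine integral_mono (int_cons μ hφ s g).abs (hφ.abs.mul_const _) fun y => ?_
  simp only [abs_mul]
  exact mul_le_mul_of_nonneg_left (ev_le _ g) (abs_nonneg _)

/-- `(Op φ g)(s) = ∫ φ(y) g(y, s) dy`. -/
def Op (φ : E → ℝ) (hφm : Measurable φ) (hφ : Integrable φ μ) : XX E →L[ℝ] XX E :=
  LinearMap.mkContinuous
    { toFun := fun g => mkXS (fun s => ∫ y, φ y * ev (y ::ₘ s) g ∂μ)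
        ((∫ y, |φ y| ∂μ) * ‖g‖) (fun s => int_cons_le μ hφ s g) (by
          intro n
          have : StronglyMeasurable fun p : E × (Fin n → E) => φ p.1 * ev (p.1 ::ₘ ms p.2) g :=
            ((hφm.comp measurable_fst).mul (ev_cons_meas n g)).stronglyMeasurable
          exact this.integral_prod_left'.measurable)
      map_add' := by
        intro g h
        apply XS_ext
        intro s
        simp only [map_add, ev_mkXS, mul_add]
        exact integral_add (int_cons μ hφ s g) (int_cons μ hφ s h)
      map_smul' := by
        intro c g
        apply XS_ext
        intro s
        simp only [map_smul, ev_mkXS, RingHom.id_apply, smul_eq_mul]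
        rw [← integral_const_mul]
        congr 1; ext y; ring }
    (∫ y, |φ y| ∂μ) (fun g => XS_norm_le _ _
      (mul_nonneg (integral_nonneg fun y => abs_nonneg _) (norm_nonneg _))
      (fun s => int_cons_le μ hφ s g))

theorem ev_Op (φ : E → ℝ) (hφm : Measurable φ) (hφ : Integrable φ μ) (g : XX E) (s : Multiset E) :
    ev s (Op μ φ hφm hφ g) = ∫ y, φ y * ev (y ::ₘ s) g ∂μ := rfl

theorem Op_norm (φ : E → ℝ) (hφm : Measurable φ) (hφ : Integrable φ μ) :
    ‖Op μ φ hφm hφ‖ ≤ ∫ y, |φ y| ∂μ :=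
  LinearMap.mkContinuous_norm_le _ (integral_nonneg fun y => abs_nonneg _) _

theorem Op_comm (φ : E → ℝ) (hφm : Measurable φ) (hφ : Integrable φ μ)
    (ψ : E → ℝ) (hψm : Measurable ψ) (hψ : Integrable ψ μ) :
    Commute (Op μ φ hφm hφ) (Op μ ψ hψm hψ) := by
  apply ContinuousLinearMap.ext
  intro g
  apply XS_ext
  intro s
  simp only [clm_mul_apply, ev_Op, ← integral_const_mul]
  rw [integral_integral_swap]
  · congr 1; ext y; congr 1; ext y'
    rw [Multiset.cons_swap]; ring
  · have h1 := (hφ.mul_prod hψ).mul_bdd (c := ‖g‖)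
      (((ev_cons_meas2 s g).comp measurable_swap).aestronglyMeasurable)
      (Filter.Eventually.of_forall fun y => ev_le _ g)
    simpa [Function.uncurry_def, mul_assoc] using h1

/-- Abstract Kirkwood-Salsburg nonvanishing. -/
theorem KS_ne_zero (e : E → E → ℝ) (hem : ∀ a, Measurable (e a))
    (w : XX E) (ξ C K t : ℝ) (hξ : 0 < ξ) (hK : 0 ≤ K)
    (hei : ∀ a, Integrable (fun y => e a y - 1) μ)
    (heC : ∀ a, ∫ y, |e a y - 1| ∂μ ≤ C)
    (hw0 : ev 0 w = 1)
    (hw : ∀ a s, ev (a ::ₘ s) w = ξ⁻¹ * (s.map (e a)).prod * ev s w)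
    (hsel : ∀ s : Multiset E, s ≠ 0 → ∃ a s', s = a ::ₘ s' ∧ |(s'.map (e a)).prod| ≤ K)
    (hq : ξ⁻¹ * K * Real.exp (|t| * (ξ * C)) < 1) :
    ev 0 (NormedSpace.exp (t • Op μ (fun _ => ξ) measurable_const (integrable_const ξ)) w) ≠ 0 := by
  intro h0
  set T := Op μ (fun _ => ξ) measurable_const (integrable_const ξ) with hT
  set G := NormedSpace.exp (t • T) w with hG
  let S : E → (XX E →L[ℝ] XX E) := fun a =>
    Op μ (fun y => ξ * (e a y - 1)) (((hem a).sub_const 1).const_mul ξ) ((hei a).const_mul ξ)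
  have hS : ∀ a, ‖S a‖ ≤ ξ * C := by
    intro a
    refine (Op_norm _ _ _ _).trans ?_
    simp only [abs_mul, abs_of_pos hξ, integral_const_mul]
    exact mul_le_mul_of_nonneg_left (heC a) hξ.le
  have hpow : ∀ (a : E) (k : ℕ) (s : Multiset E),
      ev (a ::ₘ s) ((T ^ k) w) = ξ⁻¹ * (s.map (e a)).prod * ev s (((S a + T) ^ k) w) := by
    intro a k
    induction k with
    | zero => intro s; exact hw a s
    | succ k ih =>
      intro s
      simp only [pow_succ', clm_mul_apply, add_apply, map_add]
      simp only [hT, S, ev_Op]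
      rw [← integral_add (int_cons μ ((hei a).const_mul ξ) _ _)
        (int_cons μ (integrable_const ξ) _ _), ← integral_const_mul]
      congr 1; ext y
      rw [Multiset.cons_swap, ← hT, ih (y ::ₘ s)]
      simp only [Multiset.map_cons, Multiset.prod_cons]
      ring
  have hKS : ∀ a s, ev (a ::ₘ s) G =
      ξ⁻¹ * (s.map (e a)).prod * ev s (NormedSpace.exp (t • S a) G) := by
    intro a s
    have hc : Commute (t • S a) (t • T) :=
      ((Op_comm μ _ _ _ _ _ _).smul_left t).smul_right t
    rw [hG, ← exp_add_apply _ _ hc, ← smul_add]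
    refine (exp_hasSum T t w (ev (a ::ₘ s))).unique ?_
    have := (exp_hasSum (S a + T) t w (ev s)).mul_left (ξ⁻¹ * (s.map (e a)).prod)
    refine this.congr_fun ?_
    intro k
    rw [hpow]; ring
  set q := ξ⁻¹ * K * Real.exp (|t| * (ξ * C)) with hqd
  have hq0 : 0 ≤ q := by positivity
  have hle : ‖G‖ ≤ q * ‖G‖ := by
    refine XS_norm_le _ _ (by positivity) fun s => ?_
    by_cases hs : s = 0
    · rw [hs, h0]; simp; positivity
    · obtain ⟨a, s', rfl, hb⟩ := hsel s hs
      rw [hKS, abs_mul, abs_mul, abs_of_pos (inv_pos.2 hξ), hqd, mul_assoc (ξ⁻¹ * K)]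
      have h1 : |ev s' (NormedSpace.exp (t • S a) G)| ≤ Real.exp (|t| * (ξ * C)) * ‖G‖ := by
        refine (ev_le _ _).trans ((exp_norm_le _ _).trans ?_)
        gcongr
        rw [norm_smul, Real.norm_eq_abs]
        exact mul_le_mul_of_nonneg_left (hS a) (abs_nonneg _)
      gcongr
  have hG0 : ‖G‖ = 0 := by
    have := norm_nonneg G
    nlinarith
  have := exp_inj _ _ (norm_eq_zero.1 hG0)
  rw [this] at hw0
  simp at hw0

/-- Iterated integrals. -/
theorem T_pow (ξ : ℝ) (k : ℕ) (g : XX E) :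
    ev 0 ((Op μ (fun _ => ξ) measurable_const (integrable_const ξ) ^ k) g) =
      ξ ^ k * ∫ y : Fin k → E, ev (ms y) g ∂(Measure.pi fun _ => μ) := by
  induction k generalizing g with
  | zero =>
    have h1 : (Measure.pi fun _ : Fin 0 => μ).real Set.univ = 1 := by
      simp [Measure.real, Measure.pi_univ]
    simp [ms, h1]
  | succ k ih =>
    rw [pow_succ, clm_mul_apply, ih]
    simp only [ev_Op, integral_const_mul]
    rw [pow_succ, mul_assoc]
    congr 2
    have hmp := (measurePreserving_piFinSuccAbove (fun _ : Fin (k+1) => μ) 0).symm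
    rw [← hmp.integral_comp', integral_prod_symm]
    · congr 1; ext y; congr 1; ext x
      have : (MeasurableEquiv.piFinSuccAbove (fun _ => E) (0 : Fin (k+1))).symm (x, y)
          = (Fin.cons x y : Fin (k+1) → E) := by
        simp [MeasurableEquiv.piFinSuccAbove_symm_apply, Fin.insertNthEquiv]
      rw [this, ms_cons]
    · refine Integrable.of_bound (C := ‖g‖) ?_ (Filter.Eventually.of_forall fun y => ev_le _ g)
      exact ((ev_meas (k+1) g).comp (MeasurableEquiv.measurable _)).aestronglyMeasurable



section Weights

/-- Product of pair weights of a list. -/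
def wl {E : Type*} (e : E → E → ℝ) : List E → ℝ
  | [] => 1
  | a :: l => (l.map (e a)).prod * wl e l

theorem wl_perm {E : Type*} (e : E → E → ℝ) (he : ∀ a b, e a b = e b a) {l l' : List E}
    (h : l.Perm l') : wl e l = wl e l' := by
  induction h with
  | nil => rfl
  | cons a h ih => simp only [wl, ih, (h.map (e a)).prod_eq]
  | swap a b l => simp only [wl, List.map_cons, List.prod_cons, he a b]; ring
  | trans _ _ h1 h2 => exact h1.trans h2

/-- Product of pair weights of a multiset. -/
def wm {E : Type*} (e : E → E → ℝ) (he : ∀ a b, e a b = e b a) (s : Multiset E) : ℝ :=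
  Quotient.liftOn s (wl e) (fun _ _ h => wl_perm e he h)

theorem wm_cons {E : Type*} (e : E → E → ℝ) (he : ∀ a b, e a b = e b a) (a : E) (s : Multiset E) :
    wm e he (a ::ₘ s) = (s.map (e a)).prod * wm e he s := by
  induction s using Quotient.inductionOn with
  | _ l => simp [wm, wl]

/-- Product over pairs. -/
def wf {E : Type*} (e : E → E → ℝ) (n : ℕ) (x : Fin n → E) : ℝ :=
  ∏ p ∈ Finset.univ.filter (fun p : Fin n × Fin n => p.1 < p.2), e (x p.1) (x p.2)

theorem wm_ms {E : Type*} (e : E → E → ℝ) (he : ∀ a b, e a b = e b a) (n : ℕ) (x : Fin n → E) :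
    wm e he (ms x) = wf e n x := by
  induction n with
  | zero => 
    have h : ms x = 0 := by simp [ms]
    rw [h]
    change wl e [] = _
    simp [wl, wf]
  | succ n ih =>
    obtain ⟨a, y, rfl⟩ : ∃ a y, x = (Fin.cons a y : Fin (n+1) → E) :=
      ⟨x 0, Fin.tail x, (Fin.cons_self_tail x).symm⟩
    rw [ms_cons, wm_cons, ih]
    simp only [wf, Finset.prod_filter, Fintype.prod_prod_type, Fin.prod_univ_succ]
    simp [ms, Finset.prod, Function.comp_def]

theorem sel {E : Type*} (e : E → E → ℝ) (he : ∀ a b, e a b = e b a) (h0 : ∀ a b, 0 ≤ e a b)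
    (b : ℝ) (hb : 0 ≤ b)
    (hst : ∀ n (x : Fin n → E), wf e n x ≤ b ^ n) (s : Multiset E) (hs : s ≠ 0) :
    ∃ a s', s = a ::ₘ s' ∧ |(s'.map (e a)).prod| ≤ b ^ 2 := by
  obtain ⟨n, x, rfl⟩ := ms_surj s
  have hn : n ≠ 0 := by rintro rfl; exact hs (by simp [ms])
  have key : ∏ i, ∏ j ∈ Finset.univ.erase i, e (x i) (x j) = wf e n x ^ 2 := by
    have h1 : ∀ i, ∏ j ∈ Finset.univ.erase i, e (x i) (x j)
        = (∏ j, if i < j then e (x i) (x j) else 1) * ∏ j, if j < i then e (x j) (x i) else 1 := by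
      intro i
      rw [← Finset.prod_mul_distrib, ← Finset.mul_prod_erase Finset.univ _ (Finset.mem_univ i)]
      simp only [lt_irrefl, if_false, one_mul]
      refine Finset.prod_congr rfl fun j hj => ?_
      have hij : j ≠ i := Finset.ne_of_mem_erase hj
      rcases lt_or_gt_of_ne hij with h | h
      · simp [h, not_lt.2 h.le, he (x i)]
      · simp [h, not_lt.2 h.le]
    simp only [h1, Finset.prod_mul_distrib, wf, Finset.prod_filter, Fintype.prod_prod_type, sq]
    congr 1
    exact Finset.prod_comm
  have hex : ∃ i, ∏ j ∈ Finset.univ.erase i, e (x i) (x j) ≤ b ^ 2 := by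
    by_contra! hcon
    have : Nonempty (Fin n) := ⟨⟨0, Nat.pos_of_ne_zero hn⟩⟩
    have h2 : wf e n x ^ 2 ≤ ∏ i : Fin n, b ^ 2 := by
      rw [Finset.prod_const, Finset.card_univ, Fintype.card_fin, ← pow_mul, mul_comm, pow_mul]
      exact pow_le_pow_left₀ (Finset.prod_nonneg fun _ _ => h0 _ _) (hst n x) 2
    rw [← key] at h2
    rcases hb.eq_or_lt with rfl | hb
    · have : 0 < ∏ i, ∏ j ∈ Finset.univ.erase i, e (x i) (x j) :=
        Finset.prod_pos fun i _ => lt_of_le_of_lt (by simp) (hcon i)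
      simp [hn] at h2
      linarith
    · exact absurd h2 (not_le.2 (Finset.prod_lt_prod_of_nonempty (fun i _ => by positivity)
        (fun i _ => hcon i) Finset.univ_nonempty))
  obtain ⟨i, hi⟩ := hex
  refine ⟨x i, (Finset.univ.erase i).val.map x, ?_, ?_⟩
  · rw [← Multiset.map_cons, ms]
    congr 1
    rw [← Finset.insert_val_of_notMem (Finset.notMem_erase i _),
      Finset.insert_erase (Finset.mem_univ i)]
  · rw [Multiset.map_map]
    change |∏ j ∈ Finset.univ.erase i, e (x i) (x j)| ≤ _
    rwa [abs_of_nonneg (Finset.prod_nonneg fun _ _ => h0 _ _)]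

theorem boltz_nonneg (β : ℝ) (t : EReal) : 0 ≤ boltz β t := by
  unfold boltz; split_ifs <;> positivity

theorem boltz_add (β : ℝ) (s t : EReal) (hs : s ≠ ⊥) (ht : t ≠ ⊥) :
    boltz β (s + t) = boltz β s * boltz β t := by
  by_cases h1 : s = ⊤
  · simp [boltz, h1, EReal.top_add_of_ne_bot ht]
  by_cases h2 : t = ⊤
  · simp [boltz, h2, EReal.add_top_of_ne_bot hs]
  have h3 : s + t ≠ ⊤ := (EReal.add_lt_top h1 h2).ne
  simp only [boltz, h1, h2, h3, if_false, EReal.toReal_add h1 hs h2 ht, ← Real.exp_add]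
  congr 1; ring

theorem boltz_sum {ι : Type*} (β : ℝ) (S : Finset ι) (f : ι → EReal) (hf : ∀ i, f i ≠ ⊥) :
    boltz β (∑ i ∈ S, f i) = ∏ i ∈ S, boltz β (f i) ∧ ∑ i ∈ S, f i ≠ ⊥ := by
  classical
  induction S using Finset.induction_on with
  | empty => simp [boltz]
  | insert a S ha ih =>
    rw [Finset.sum_insert ha, Finset.prod_insert ha, boltz_add _ _ _ (hf a) ih.2, ih.1]
    refine ⟨rfl, ?_⟩
    rw [← bot_lt_iff_ne_bot, EReal.bot_lt_add_iff]
    exact ⟨bot_lt_iff_ne_bot.2 (hf a), bot_lt_iff_ne_bot.2 ih.2⟩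

theorem boltz_le (β : ℝ) (hβ : 0 < β) (m : ℝ) (t : EReal) (h : (m : EReal) ≤ t) :
    boltz β t ≤ Real.exp (-β * m) := by
  unfold boltz
  split_ifs with h1
  · positivity
  · have : m ≤ t.toReal := by
      have := EReal.toReal_le_toReal h (EReal.coe_ne_bot m) h1
      simpa using this
    apply Real.exp_le_exp.2
    nlinarith

theorem boltz_meas (β : ℝ) : Measurable (boltz β) := by
  unfold boltz
  refine Measurable.ite (measurableSet_singleton _) measurable_const ?_
  exact Real.measurable_exp.comp (measurable_ereal_toReal.const_mul _)

end Weights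
end KS

/-- second Lenard-positivity condition: for real `0 < z < z₀`, the
partition function at negative activity is strictly positive,
`Ξ_Λ(-z) = Σ_k ((-z)^k/k!) ∫_{Λ^k} e^{-βH(y)} dy > 0`. -/
theorem statement5 {d : ℕ} (hd : 1 ≤ d) (β B : ℝ) (hβ : 0 < β) (hB : 0 ≤ B)
    (u : (Fin d → ℝ) → EReal) (hu : IsPairPotential u)
    (hstab : IsStable u B) (hreg : IsRegularPP β u)
    (Λ : Set (Fin d → ℝ)) (hΛb : IsBounded Λ) (hΛm : MeasurableSet Λ)
    (z : ℝ) (hz0 : 0 < z) (hz : z * (Real.exp (2 * β * B + 1) * Creg β u) < 1) :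
    0 < ∑' k : ℕ, (-z) ^ k / (Nat.factorial k : ℝ) *
      ∫ y in cube Λ k, boltz β (Ham u k y) := by
  obtain ⟨hum, hev, m, hm⟩ := hu
  have hbot : ∀ x, u x ≠ ⊥ := fun x h => by
    have := hm x
    rw [h] at this
    exact absurd this (by simp)
  let e : (Fin d → ℝ) → (Fin d → ℝ) → ℝ := fun a b => boltz β (u (a - b))
  have he : ∀ a b, e a b = e b a := fun a b => by
    simp only [e]; rw [← hev, neg_sub]
  have he0 : ∀ a b, 0 ≤ e a b := fun a b => boltz_nonneg _ _
  have hem2 : Measurable fun p : (Fin d → ℝ) × (Fin d → ℝ) => e p.1 p.2 :=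
    (boltz_meas β).comp (hum.comp (measurable_fst.sub measurable_snd))
  have hem : ∀ a, Measurable (e a) := fun a => hem2.comp (measurable_const.prodMk measurable_id)
  have hwf : ∀ n (x : Fin n → (Fin d → ℝ)), boltz β (Ham u n x) = wf e n x := fun n x =>
    (boltz_sum β _ _ fun p => hbot _).1
  have hst : ∀ n (x : Fin n → (Fin d → ℝ)), wf e n x ≤ Real.exp (β * B) ^ n := by
    intro n x
    rw [← hwf, ← Real.exp_nat_mul]
    refine (boltz_le β hβ _ _ (hstab n x)).trans (le_of_eq ?_)
    congr 1; ring
  have hwf0 : ∀ n (x : Fin n → (Fin d → ℝ)), 0 ≤ wf e n x :=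
    fun n x => Finset.prod_nonneg fun _ _ => he0 _ _
  have hwfm : ∀ n, Measurable (wf e n) := fun n => by
    unfold wf
    refine Finset.measurable_fun_prod _ fun p _ => ?_
    have h1 : Measurable fun x : Fin n → (Fin d → ℝ) => (x p.1, x p.2) :=
      (measurable_pi_apply p.1).prodMk (measurable_pi_apply p.2)
    exact hem2.comp h1
  set ξ := Real.exp (2 * β * B + 1) with hξ
  have hξ0 : 0 < ξ := Real.exp_pos _
  have hcard : ∀ {n : ℕ} (x : Fin n → (Fin d → ℝ)), Multiset.card (ms x) = n := by
    intro n x; simp [ms]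
  let w : XX (Fin d → ℝ) := mkXS (fun s => (ξ⁻¹) ^ (Multiset.card s) * wm e he s) 1 (by
      intro s
      obtain ⟨n, x, rfl⟩ := ms_surj s
      rw [wm_ms, hcard, abs_of_nonneg (mul_nonneg (by positivity) (hwf0 n x))]
      calc ξ⁻¹ ^ n * wf e n x ≤ ξ⁻¹ ^ n * Real.exp (β * B) ^ n := by
            gcongr; exact hst n x
        _ = (ξ⁻¹ * Real.exp (β * B)) ^ n := (mul_pow _ _ _).symm
        _ ≤ 1 := by
            apply pow_le_one₀ (by positivity)
            rw [hξ, ← Real.exp_neg, ← Real.exp_add]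
            apply Real.exp_le_one_iff.2
            nlinarith [mul_nonneg hβ.le hB])
    (by
      intro n
      simp only [wm_ms, hcard]
      exact (hwfm n).const_mul _)
  let μ : Measure (Fin d → ℝ) := volume.restrict Λ
  have : IsFiniteMeasure μ := ⟨by
    rw [Measure.restrict_apply_univ]
    exact hΛb.measure_lt_top⟩
  have hmay : ∀ a, (fun y => e a y - 1) = fun y => mayer β u (a - y) := fun a => rfl
  have hei' : ∀ a, Integrable (fun y => e a y - 1) volume := fun a => by
    rw [hmay]; exact hreg.comp_sub_left a
  have hei : ∀ a, Integrable (fun y => e a y - 1) μ := fun a => (hei' a).restrict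
  have heC : ∀ a, ∫ y, |e a y - 1| ∂μ ≤ Creg β u := by
    intro a
    refine (setIntegral_le_integral (hei' a).abs
      (Filter.Eventually.of_forall fun y => abs_nonneg _)).trans (le_of_eq ?_)
    exact integral_sub_left_eq_self (fun y => |mayer β u y|) volume a
  have hC0 : 0 ≤ Creg β u := integral_nonneg fun y => abs_nonneg _
  let T := Op μ (fun _ => ξ) measurable_const (integrable_const ξ)
  have hne : ∀ t ∈ Set.Icc (-z) 0, ev 0 (NormedSpace.exp (t • T) w) ≠ 0 := by
    intro t ht
    refine KS_ne_zero μ e hem w ξ (Creg β u) (Real.exp (β * B) ^ 2) t hξ0 (by positivity)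
      hei heC ?_ ?_ (sel e he he0 _ (Real.exp_pos _).le hst) ?_
    · simp only [w, ev_mkXS]
      have := wm_ms e he 0 Fin.elim0
      simpa [ms, wf] using this
    · intro a s
      simp only [w, ev_mkXS, wm_cons, Multiset.card_cons, pow_succ]
      ring
    · have h1 : |t| * (ξ * Creg β u) < 1 := by
        refine lt_of_le_of_lt ?_ hz
        gcongr
        rw [abs_of_nonpos ht.2]; linarith [ht.1]
      rw [hξ, ← Real.exp_neg, ← Real.exp_nat_mul, ← Real.exp_add, ← Real.exp_add, ← hξ]
      apply Real.exp_lt_one_iff.2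
      push_cast
      linarith
  have hsum : ∀ t : ℝ, ev 0 (NormedSpace.exp (t • T) w) =
      ∑' k : ℕ, t ^ k / (Nat.factorial k : ℝ) * ∫ y in cube Λ k, boltz β (Ham u k y) := by
    intro t
    rw [← (exp_hasSum T t w (ev 0)).tsum_eq]
    congr 1; ext k
    congr 1
    rw [T_pow, cube, volume_pi, Measure.restrict_pi_pi, ← integral_const_mul]
    congr 1; ext y
    simp only [w, ev_mkXS]
    rw [wm_ms, hcard, hwf, ← mul_assoc, ← mul_pow, mul_inv_cancel₀ hξ0.ne', one_pow, one_mul]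
  rw [← hsum]
  by_contra hcon
  have hcont := exp_cont T w (ev 0)
  have h0 : ev 0 (NormedSpace.exp ((0:ℝ) • T) w) = 1 := by
    have h1 : NormedSpace.exp ((0:ℝ) • T) w = w := by
      rw [zero_smul, NormedSpace.exp_zero]; rfl
    rw [h1]
    simp only [w, ev_mkXS]
    have := wm_ms e he 0 Fin.elim0
    simpa [ms, wf] using this
  obtain ⟨t, ht, hte⟩ := intermediate_value_Icc (a := -z) (b := 0) (by linarith)
    hcont.continuousOn (show (0:ℝ) ∈ Set.Icc _ _ from ⟨not_lt.1 hcon, by simp only [h0]; norm_num⟩)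
  exact hne t ht hte
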